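/- arXiv:1804.00360 — 2 statements merged into one kernel-verified Lean document; each statement's English description precedes it below -/
import Mathlib

section
/- Let X be a finite set, let A, B, C_1, …, C_k ⊆ X be sets whose indicator vectors e_A, e_B, e_{C_1}, …, e_{C_k} ∈ ℝ^X are pairwise distinct, and suppose e_A − e_B = Σ_{i=1}^k γ_i (e_{C_i} − e_B) with γ_1, …, γ_k > 0. Then A ∩ B ⊆ C_i ⊆ A ∪ B for every i ∈ {1, …, k}. -/
variable {X : Type*} [Fintype X] [DecidableEq X]

/-- Indicator vector of a finite subset of `X`. -/
def indVec (A : Finset X) : X → ℝ := fun x => if x ∈ A then 1 else 0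

/-- If `e_A, e_B, e_{C₁}, …, e_{C_k}` are pairwise distinct and
`e_A - e_B = ∑ᵢ γᵢ (e_{Cᵢ} - e_B)` with all `γᵢ > 0`, then `A ∩ B ⊆ Cᵢ ⊆ A ∪ B`
for every `i`. -/
theorem sandwich_lemma (k : ℕ) (A B : Finset X) (C : Fin k → Finset X) (γ : Fin k → ℝ)
    (hAB : indVec A ≠ indVec B)
    (hCA : ∀ i, indVec (C i) ≠ indVec A)
    (hCB : ∀ i, indVec (C i) ≠ indVec B)
    (hCC : ∀ i j, i ≠ j → indVec (C i) ≠ indVec (C j))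
    (hγ : ∀ i, 0 < γ i)
    (heq : indVec A - indVec B = ∑ i, γ i • (indVec (C i) - indVec B)) :
    ∀ i, A ∩ B ⊆ C i ∧ C i ⊆ A ∪ B := by
  intro i
  have hx : ∀ x, indVec A x - indVec B x = ∑ i, γ i * (indVec (C i) x - indVec B x) := by
    intro x
    have := congrFun heq x
    simpa [Finset.sum_apply] using this
  constructor
  · intro x hxm
    rw [Finset.mem_inter] at hxm
    have h := hx x
    have hn : ∀ j ∈ Finset.univ, γ j * (indVec (C j) x - indVec B x) ≤ 0 := by
      intro j _
      apply mul_nonpos_of_nonneg_of_nonpos (hγ j).le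
      simp only [indVec, hxm.2, if_true]
      split_ifs <;> norm_num
    have h0 : ∑ j, γ j * (indVec (C j) x - indVec B x) = 0 := by
      rw [← h]; simp [indVec, hxm.1, hxm.2]
    have hi := (Finset.sum_eq_zero_iff_of_nonpos hn).1 h0 i (Finset.mem_univ i)
    by_contra hc
    have := hγ i
    simp [indVec, hxm.2, hc] at hi
    linarith
  · intro x hxC
    by_contra hxm
    rw [Finset.mem_union, not_or] at hxm
    have h := hx x
    have hn : ∀ j ∈ Finset.univ, 0 ≤ γ j * (indVec (C j) x - indVec B x) := by
      intro j _
      apply mul_nonneg (hγ j).le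
      simp only [indVec, hxm.2, if_false]
      split_ifs <;> norm_num
    have h0 : ∑ j, γ j * (indVec (C j) x - indVec B x) = 0 := by
      rw [← h]; simp [indVec, hxm.1, hxm.2]
    have hi := (Finset.sum_eq_zero_iff_of_nonneg hn).1 h0 i (Finset.mem_univ i)
    have := hγ i
    simp [indVec, hxm.2, hxC] at hi
    linarith
end

section
/- Let M be a matroid on a finite ground set X and let P_M be the convex hull in ℝ^X of the indicator vectors of the independent sets of M. Let A and B be distinct independent sets of M. Then e_A and e_B form an edge of P_M (i.e., the segment [e_A, e_B] is a face of P_M) if and only if for all independent sets C, D of M, the equality e_A + e_B = e_C + e_D implies {A, B} = {C, D}. -/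
variable {X : Type*} [Fintype X] [DecidableEq X]

theorem aux_augment {X : Type*} [DecidableEq X] (Indep : Finset X → Prop)
    (h_exchange : ∀ A B : Finset X, Indep A → Indep B → A.card < B.card →
      ∃ b ∈ B \ A, Indep (insert b A)) (n : ℕ) :
    ∀ I S : Finset X, Indep I → Indep S → I.card + n = S.card →
      ∃ K, I ⊆ K ∧ K ⊆ I ∪ S ∧ K.card = S.card ∧ Indep K := by
  induction n with
  | zero =>
    intro I S hI hS h
    exact ⟨I, Finset.Subset.refl _, Finset.subset_union_left, by omega, hI⟩
  | succ n ih =>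
    intro I S hI hS h
    obtain ⟨b, hb, hbI⟩ := h_exchange I S hI hS (by omega)
    rw [Finset.mem_sdiff] at hb
    obtain ⟨K, h1, h2, h3, h4⟩ := ih (insert b I) S hbI hS
      (by rw [Finset.card_insert_of_notMem hb.2]; omega)
    refine ⟨K, (Finset.subset_insert b I).trans h1, ?_, h3, h4⟩
    intro x hx
    have := h2 hx
    simp only [Finset.mem_union, Finset.mem_insert] at this ⊢
    rcases this with (rfl | h) | h
    · exact Or.inr hb.1
    · exact Or.inl h
    · exact Or.inr h

theorem aux_symm_exchange {X : Type*} [DecidableEq X] (Indep : Finset X → Prop)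
    (h_subset : ∀ A B : Finset X, B ⊆ A → Indep A → Indep B)
    (h_exchange : ∀ A B : Finset X, Indep A → Indep B → A.card < B.card →
      ∃ b ∈ B \ A, Indep (insert b A))
    (A B : Finset X) (hA : Indep A) (hB : Indep B) (hc : A.card = B.card)
    (a : X) (haA : a ∈ A) (haB : a ∉ B) :
    ∃ b ∈ B, b ∉ A ∧ Indep (insert b (A.erase a)) ∧ Indep (insert a (B.erase b)) := by
  have hAe : Indep (A.erase a) := h_subset _ _ (Finset.erase_subset _ _) hA
  have hcard : (A.erase a).card + 1 = A.card := Finset.card_erase_add_one haA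
  by_cases hBa : Indep (insert a B)
  · obtain ⟨b, hb, hbI⟩ := h_exchange (A.erase a) B hAe hB (by omega)
    rw [Finset.mem_sdiff, Finset.mem_erase] at hb
    refine ⟨b, hb.1, ?_, hbI, ?_⟩
    · intro h
      exact hb.2 ⟨fun e => haB (e ▸ hb.1), h⟩
    · exact h_subset _ _ (Finset.insert_subset_insert _ (Finset.erase_subset _ _)) hBa
  · obtain ⟨J, hJB, hJ⟩ := exists_minimal_le_of_wellFoundedLT
      (fun J : Finset X => ¬ Indep (insert a J)) B hBa
    have hJB : J ⊆ B := hJB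
    have hJi : Indep J := h_subset _ _ hJB hB
    have haJ : a ∉ J := fun h => haB (hJB h)
    have hJc := Finset.card_le_card hJB
    obtain ⟨K, h1, h2, h3, h4⟩ := aux_augment Indep h_exchange (A.card - J.card) J A hJi hA
      (by omega)
    have haK : a ∉ K := fun h => hJ.prop (h_subset K _ (Finset.insert_subset h h1) h4)
    obtain ⟨b, hb, hbI⟩ := h_exchange (A.erase a) K hAe h4 (by omega)
    rw [Finset.mem_sdiff, Finset.mem_erase] at hb
    have hba : b ≠ a := fun e => haK (e ▸ hb.1)
    have hbA : b ∉ A := fun h => hb.2 ⟨hba, h⟩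
    have hbJ : b ∈ J := by
      rcases Finset.mem_union.1 (h2 hb.1) with h | h
      · exact h
      · exact absurd h hbA
    refine ⟨b, hJB hbJ, hbA, hbI, ?_⟩
    have hJb : Indep (insert a (J.erase b)) := by
      by_contra h
      have := hJ.le_of_le h (Finset.erase_subset _ _)
      exact Finset.notMem_erase b J (this hbJ)
    have hJbc : (insert a (J.erase b)).card = J.card := by
      rw [Finset.card_insert_of_notMem (fun h => haJ (Finset.mem_of_mem_erase h)),
        Finset.card_erase_add_one hbJ]
    obtain ⟨L, g1, g2, g3, g4⟩ := aux_augment Indep h_exchange (B.card - J.card)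
      (insert a (J.erase b)) B hJb hB (by omega)
    have hbL : b ∉ L := by
      intro h
      apply hJ.prop
      refine h_subset L _ ?_ g4
      intro x hx
      by_cases hxb : x = b
      · exact hxb ▸ h
      · apply g1
        simp only [Finset.mem_insert, Finset.mem_erase] at hx ⊢
        tauto
    have hLs : L ⊆ insert a (B.erase b) := by
      intro x hx
      have hxb : x ≠ b := fun e => hbL (e ▸ hx)
      have := g2 hx
      simp only [Finset.mem_insert, Finset.mem_erase, Finset.mem_union] at this ⊢
      rcases this with (h | h) | h
      · exact Or.inl h
      · exact Or.inr ⟨hxb, hJB h.2⟩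
      · exact Or.inr ⟨hxb, h⟩
    have : L = insert a (B.erase b) := by
      apply Finset.eq_of_subset_of_card_le hLs
      rw [Finset.card_insert_of_notMem (fun h => haB (Finset.mem_of_mem_erase h)),
        Finset.card_erase_add_one (hJB hbJ)]
      omega
    exact this ▸ g4

theorem aux_indVec_inj {X : Type*} [DecidableEq X] {A B : Finset X}
    (h : ∀ x, indVec A x = indVec B x) : A = B := by
  ext x
  have := h x
  unfold indVec at this
  by_cases h1 : x ∈ A <;> by_cases h2 : x ∈ B <;> simp_all

theorem aux_face {X : Type*} [Fintype X] [DecidableEq X] (Indep : Finset X → Prop)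
    (A B : Finset X) (hA : Indep A) (hB : Indep B) (w : X → ℝ) (c : ℝ)
    (hAc : ∑ x, w x * indVec A x = c) (hBc : ∑ x, w x * indVec B x = c)
    (hle : ∀ C, Indep C → ∑ x, w x * indVec C x ≤ c)
    (heq : ∀ C, Indep C → ∑ x, w x * indVec C x = c → C = A ∨ C = B) :
    IsExtreme ℝ (convexHull ℝ {x | ∃ C : Finset X, Indep C ∧ x = indVec C})
        (segment ℝ (indVec A) (indVec B)) := by
  have hlin : ∀ (s t : ℝ) (u v : X → ℝ), ∑ x, w x * (s • u + t • v) x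
      = s * ∑ x, w x * u x + t * ∑ x, w x * v x := by
    intro s t u v
    rw [Finset.mul_sum, Finset.mul_sum, ← Finset.sum_add_distrib]
    refine Finset.sum_congr rfl fun x _ => ?_
    simp only [Pi.add_apply, Pi.smul_apply, smul_eq_mul]
    ring
  have key : convexHull ℝ {x | ∃ C : Finset X, Indep C ∧ x = indVec C} ⊆
      {u : X → ℝ | ∑ x, w x * u x ≤ c ∧
        (∑ x, w x * u x = c → u ∈ segment ℝ (indVec A) (indVec B))} := by
    apply convexHull_min
    · rintro _ ⟨C, hC, rfl⟩
      refine ⟨hle C hC, fun h => ?_⟩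
      rcases heq C hC h with rfl | rfl
      · exact left_mem_segment _ _ _
      · exact right_mem_segment _ _ _
    · rintro u ⟨hu, hu2⟩ v ⟨hv, hv2⟩ s t hs ht hst
      simp only [Set.mem_ofPred_eq]
      rw [hlin]
      have hs' : s = 1 - t := by linarith
      refine ⟨?_, fun h => ?_⟩
      · have := mul_le_mul_of_nonneg_left hu hs
        have := mul_le_mul_of_nonneg_left hv ht
        have : s * c + t * c = c := by rw [← add_mul, hst, one_mul]
        linarith
      · rcases hs.eq_or_lt with h0 | hs0
        · have ht1 : t = 1 := by linarith
          subst ht1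
          rw [← h0] at h ⊢
          simpa using hv2 (by linarith)
        rcases ht.eq_or_lt with h0 | ht0
        · have hs1 : s = 1 := by linarith
          rw [← h0, hs1] at h ⊢
          simpa using hu2 (by linarith)
        have e1 : ∑ x, w x * u x = c := by
          apply le_antisymm hu
          have := mul_le_mul_of_nonneg_left hv ht
          have h3 : s * c ≤ s * ∑ x, w x * u x := by
            have : s * c + t * c = c := by rw [← add_mul, hst, one_mul]
            linarith
          exact le_of_mul_le_mul_left h3 hs0
        have e2 : ∑ x, w x * v x = c := by
          apply le_antisymm hv
          have := mul_le_mul_of_nonneg_left hu hs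
          have h3 : t * c ≤ t * ∑ x, w x * v x := by
            have : s * c + t * c = c := by rw [← add_mul, hst, one_mul]
            linarith
          exact le_of_mul_le_mul_left h3 ht0
        exact convex_segment _ _ (hu2 e1) (hv2 e2) hs ht hst
  refine ⟨?_, ?_⟩
  · exact (convex_convexHull ℝ _).segment_subset
      (subset_convexHull ℝ _ ⟨A, hA, rfl⟩) (subset_convexHull ℝ _ ⟨B, hB, rfl⟩)
  · intro u hu v hv z hz hzo
    obtain ⟨hu1, hu2⟩ := key hu
    obtain ⟨hv1, _⟩ := key hv
    apply hu2
    obtain ⟨p, q, hp, hq, hpq, rfl⟩ := hz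
    obtain ⟨s, t, hs, ht, hst, h⟩ := hzo
    have h1 := hlin p q (indVec A) (indVec B)
    rw [← h, hlin, hAc, hBc, ← add_mul, hpq, one_mul] at h1
    apply le_antisymm hu1
    have := mul_le_mul_of_nonneg_left hv1 ht.le
    have h3 : s * c ≤ s * ∑ x, w x * u x := by
      have : s * c + t * c = c := by rw [← add_mul, hst, one_mul]
      linarith
    exact le_of_mul_le_mul_left h3 hs

theorem aux_case_one {X : Type*} [Fintype X] [DecidableEq X] (Indep : Finset X → Prop)
    (A : Finset X) (b : X) (hb : b ∉ A) (hA : Indep A) (hB : Indep (insert b A)) :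
    IsExtreme ℝ (convexHull ℝ {x | ∃ C : Finset X, Indep C ∧ x = indVec C})
        (segment ℝ (indVec A) (indVec (insert b A))) := by
  have hterm : ∀ C : Finset X, ∀ x ∈ Finset.univ,
      (if x ∈ A then (1 : ℝ) else if x = b then 0 else -1) * indVec C x ≤
      (if x ∈ A then (1 : ℝ) else if x = b then 0 else -1) * indVec A x := by
    intro C x _
    unfold indVec
    split_ifs <;> norm_num
  refine aux_face Indep A (insert b A) hA hB
    (fun x => if x ∈ A then 1 else if x = b then 0 else -1) _ rfl ?_ ?_ ?_
  · refine Finset.sum_congr rfl fun x _ => ?_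
    simp only [indVec, Finset.mem_insert]
    by_cases h1 : x ∈ A <;> by_cases h2 : x = b <;> simp [h1, h2]
  · intro C _
    exact Finset.sum_le_sum (hterm C)
  · intro C _ h
    have h' := (Finset.sum_eq_sum_iff_of_le (hterm C)).1 h
    have h2 : ∀ x, x ≠ b → (x ∈ C ↔ x ∈ A) := by
      intro x hx
      have := h' x (Finset.mem_univ x)
      unfold indVec at this
      by_cases h1 : x ∈ A <;> by_cases h2 : x ∈ C <;> simp_all
    by_cases hbC : b ∈ C
    · right
      ext x
      by_cases hx : x = b
      · simp [hx, hbC]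
      · simp [hx, h2 x hx]
    · left
      ext x
      by_cases hx : x = b
      · simp [hx, hbC, hb]
      · simp [h2 x hx]

theorem aux_case_two {X : Type*} [Fintype X] [DecidableEq X] (Indep : Finset X → Prop)
    (h_subset : ∀ A B : Finset X, B ⊆ A → Indep A → Indep B)
    (I : Finset X) (a b : X) (ha : a ∉ I) (hb : b ∉ I) (hab : a ≠ b)
    (hA : Indep (insert a I)) (hB : Indep (insert b I))
    (hdep : ¬ Indep (insert a (insert b I))) :
    IsExtreme ℝ (convexHull ℝ {x | ∃ C : Finset X, Indep C ∧ x = indVec C})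
        (segment ℝ (indVec (insert a I)) (indVec (insert b I))) := by
  set w : X → ℝ := fun x => if x ∈ I then 2 else if x = a then 1 else if x = b then 1 else -1
    with hw
  have hAI : ∀ d, d ∉ I → (d = a ∨ d = b) →
      ∑ x, w x * indVec (insert d I) x = ∑ x, w x * indVec I x + 1 := by
    intro d hd hd2
    have : ∀ x ∈ Finset.univ, w x * indVec (insert d I) x
        = w x * indVec I x + if x = d then 1 else 0 := by
      intro x _
      simp only [indVec, Finset.mem_insert, hw]
      by_cases h1 : x ∈ I
      · have : x ≠ d := fun e => hd (e ▸ h1)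
        simp [h1, this]
      · by_cases h2 : x = d
        · subst h2
          rcases hd2 with rfl | rfl <;> simp [h1]
        · simp [h1, h2]
    rw [Finset.sum_congr rfl this, Finset.sum_add_distrib]
    simp
  have hAI1 := hAI a ha (Or.inl rfl)
  have hBI1 := hAI b hb (Or.inr rfl)
  have main : ∀ C, Indep C → ∑ x, w x * indVec C x ≤ ∑ x, w x * indVec I x + 1 ∧
      (∑ x, w x * indVec C x = ∑ x, w x * indVec I x + 1 →
        C = insert a I ∨ C = insert b I) := by
    intro C hC
    by_cases hbC : b ∈ C
    · by_cases haC : a ∈ C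
      · obtain ⟨i, hiI, hiC⟩ : ∃ i ∈ I, i ∉ C := by
          by_contra! h
          exact hdep (h_subset C _ (Finset.insert_subset haC (Finset.insert_subset hbC h)) hC)
        have : ∑ x, w x * indVec C x ≤ ∑ x, (w x * indVec I x + (if x = a then 1 else 0)
            + (if x = b then 1 else 0) - (if x = i then 2 else 0)) := by
          refine Finset.sum_le_sum fun x _ => ?_
          simp only [indVec, hw]
          by_cases h1 : x ∈ I
          · have e1 : x ≠ a := fun e => ha (e ▸ h1)
            have e2 : x ≠ b := fun e => hb (e ▸ h1)
            by_cases h2 : x = i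
            · subst h2
              simp [h1, e1, e2, hiC]
            · simp only [h1, e1, e2, h2, if_true, if_false]
              split_ifs <;> norm_num
          · have e1 : x ≠ i := fun e => h1 (e ▸ hiI)
            simp only [h1, e1, if_false]
            split_ifs <;> norm_num
        rw [Finset.sum_sub_distrib, Finset.sum_add_distrib, Finset.sum_add_distrib] at this
        simp only [Finset.sum_ite_eq', Finset.mem_univ, if_true] at this
        exact ⟨by linarith, fun h => by linarith⟩
      · have hterm : ∀ x ∈ Finset.univ, w x * indVec C x ≤ w x * indVec (insert b I) x := by
          intro x _
          simp only [indVec, hw, Finset.mem_insert]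
          by_cases h0 : x = a
          · subst h0
            simp [haC, ha, hab]
          · by_cases h1 : x ∈ I <;> by_cases h2 : x = b <;> simp only [h0, h1, h2, if_true, if_false, or_true, true_or, or_self] <;>
              split_ifs <;> norm_num
        refine ⟨hBI1 ▸ Finset.sum_le_sum hterm, fun h => Or.inr ?_⟩
        rw [← hBI1] at h
        have h' := (Finset.sum_eq_sum_iff_of_le hterm).1 h
        refine aux_indVec_inj fun x => mul_left_cancel₀ ?_ (h' x (Finset.mem_univ x))
        simp only [hw]
        split_ifs <;> norm_num
    · have hterm : ∀ x ∈ Finset.univ, w x * indVec C x ≤ w x * indVec (insert a I) x := by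
        intro x _
        simp only [indVec, hw, Finset.mem_insert]
        by_cases h0 : x = b
        · subst h0
          simp [hbC, hb, hab.symm]
        · by_cases h1 : x ∈ I <;> by_cases h2 : x = a <;> simp only [h0, h1, h2, if_true, if_false, or_true, true_or, or_self] <;>
            split_ifs <;> norm_num
      refine ⟨hAI1 ▸ Finset.sum_le_sum hterm, fun h => Or.inl ?_⟩
      rw [← hAI1] at h
      have h' := (Finset.sum_eq_sum_iff_of_le hterm).1 h
      refine aux_indVec_inj fun x => mul_left_cancel₀ ?_ (h' x (Finset.mem_univ x))
      simp only [hw]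
      split_ifs <;> norm_num
  exact aux_face Indep _ _ hA hB w _ hAI1 hBI1 (fun C hC => (main C hC).1)
    (fun C hC => (main C hC).2)

theorem aux_indVec_sum {X : Type*} [DecidableEq X] {A B C D : Finset X}
    (h1 : A ∪ B = C ∪ D) (h2 : A ∩ B = C ∩ D) :
    indVec A + indVec B = indVec C + indVec D := by
  ext x
  have e1 : x ∈ A ∪ B ↔ x ∈ C ∪ D := by rw [h1]
  have e2 : x ∈ A ∩ B ↔ x ∈ C ∩ D := by rw [h2]
  simp only [Finset.mem_union, Finset.mem_inter] at e1 e2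
  simp only [indVec, Pi.add_apply]
  by_cases hA : x ∈ A <;> by_cases hB : x ∈ B <;> by_cases hC : x ∈ C <;>
    by_cases hD : x ∈ D <;> simp_all

theorem aux_lt {X : Type*} [Fintype X] [DecidableEq X] (Indep : Finset X → Prop)
    (h_subset : ∀ A B : Finset X, B ⊆ A → Indep A → Indep B)
    (h_exchange : ∀ A B : Finset X, Indep A → Indep B → A.card < B.card →
      ∃ b ∈ B \ A, Indep (insert b A))
    (A B : Finset X) (hA : Indep A) (hB : Indep B) (hlt : A.card < B.card)
    (hu : ∀ C D : Finset X, Indep C → Indep D →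
        indVec A + indVec B = indVec C + indVec D →
          ({A, B} : Set (Finset X)) = {C, D}) :
    IsExtreme ℝ (convexHull ℝ {x | ∃ C : Finset X, Indep C ∧ x = indVec C})
        (segment ℝ (indVec A) (indVec B)) := by
  obtain ⟨b, hb, hbI⟩ := h_exchange A B hA hB hlt
  rw [Finset.mem_sdiff] at hb
  have h := hu (insert b A) (B.erase b) hbI (h_subset _ _ (Finset.erase_subset _ _) hB)
    (aux_indVec_sum (by grind) (by grind))
  have hAm : A ∈ ({insert b A, B.erase b} : Set (Finset X)) := h ▸ Set.mem_insert _ _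
  have hAe : A = B.erase b := by
    rcases hAm with h | h
    · exact absurd (h ▸ Finset.mem_insert_self b A) hb.2
    · exact h
  have hBe : B = insert b A := by rw [hAe, Finset.insert_erase hb.1]
  rw [hBe]
  exact aux_case_one Indep A b hb.2 hA hbI

/-- Two distinct vertices `e_A`, `e_B` of the independence polytope of a matroid form an
edge iff `e_A + e_B` has a unique decomposition as a sum of two vertices. The matroid is
given by its independence predicate `Indep`, which contains `∅`, is closed under taking
subsets, and satisfies the exchange axiom. -/
theorem edge_matroid_polytope_iff (Indep : Finset X → Prop)
    (h_empty : Indep ∅)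
    (h_subset : ∀ A B : Finset X, B ⊆ A → Indep A → Indep B)
    (h_exchange : ∀ A B : Finset X, Indep A → Indep B → A.card < B.card →
      ∃ b ∈ B \ A, Indep (insert b A))
    (A B : Finset X) (hA : Indep A) (hB : Indep B) (hAB : A ≠ B) :
    IsExtreme ℝ (convexHull ℝ {x | ∃ C : Finset X, Indep C ∧ x = indVec C})
        (segment ℝ (indVec A) (indVec B)) ↔
      ∀ C D : Finset X, Indep C → Indep D →
        indVec A + indVec B = indVec C + indVec D →
          ({A, B} : Set (Finset X)) = {C, D} := by
  constructor
  · intro hE C D hC hD h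
    have hCm := subset_convexHull ℝ {x | ∃ C : Finset X, Indep C ∧ x = indVec C} ⟨C, hC, rfl⟩
    have hDm := subset_convexHull ℝ {x | ∃ C : Finset X, Indep C ∧ x = indVec C} ⟨D, hD, rfl⟩
    have hseg : ∀ C : Finset X, indVec C ∈ segment ℝ (indVec A) (indVec B) → C = A ∨ C = B := by
      rintro C ⟨s, t, hs, ht, hst, h⟩
      obtain ⟨x, hx⟩ : ∃ x, ¬ (x ∈ A ↔ x ∈ B) := by
        by_contra! h
        exact hAB (Finset.ext h)
      have hst' : s = 0 ∨ t = 0 := by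
        have := congrFun h x
        simp only [indVec, Pi.add_apply, Pi.smul_apply, smul_eq_mul] at this
        by_cases h1 : x ∈ A <;> by_cases h2 : x ∈ B <;> by_cases h3 : x ∈ C <;>
          simp only [h1, h2, h3, if_true, if_false] at this hx
        · simp at hx
        · simp at hx
        · right; linarith
        · left; linarith
        · left; linarith
        · right; linarith
        · simp at hx
        · simp at hx
      rcases hst' with h0 | h0
      · right
        have : t = 1 := by linarith
        rw [h0, this] at h
        exact aux_indVec_inj fun x => by rw [← h]; simp
      · left
        have : s = 1 := by linarith
        rw [h0, this] at h
        exact aux_indVec_inj fun x => by rw [← h]; simp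
    have hmid : (1/2 : ℝ) • indVec A + (1/2 : ℝ) • indVec B ∈
        segment ℝ (indVec A) (indVec B) :=
      ⟨1/2, 1/2, by norm_num, by norm_num, by norm_num, rfl⟩
    have hmid2 : (1/2 : ℝ) • indVec A + (1/2 : ℝ) • indVec B =
        (1/2 : ℝ) • indVec C + (1/2 : ℝ) • indVec D := by
      rw [← smul_add, ← smul_add, h]
    have hCs := hseg C (hE.left_mem_of_mem_openSegment hCm hDm hmid
      ⟨1/2, 1/2, by norm_num, by norm_num, by norm_num, hmid2.symm⟩)
    rcases hCs with rfl | rfl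
    · rw [aux_indVec_inj fun x => congrFun (add_left_cancel h) x]
    · rw [add_comm] at h
      rw [aux_indVec_inj fun x => congrFun (add_left_cancel h) x, Set.pair_comm]
  · intro hu
    rcases lt_trichotomy A.card B.card with hlt | hc | hlt
    · exact aux_lt Indep h_subset h_exchange A B hA hB hlt hu
    · obtain ⟨a, haA, haB⟩ : ∃ a ∈ A, a ∉ B := by
        by_contra! h
        exact hAB (Finset.eq_of_subset_of_card_le h hc.ge)
      obtain ⟨b, hbB, hbA, h1, h2⟩ :=
        aux_symm_exchange Indep h_subset h_exchange A B hA hB hc a haA haB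
      have h := hu _ _ h1 h2
        (aux_indVec_sum (by clear hu h1 h2 h_subset h_exchange; grind)
          (by clear hu h1 h2 h_subset h_exchange; grind))
      have hBm : B ∈ ({insert b (A.erase a), insert a (B.erase b)} : Set (Finset X)) :=
        h ▸ Set.mem_insert_of_mem _ rfl
      have hBe : B = insert b (A.erase a) := by
        rcases hBm with h | h
        · exact h
        · exact absurd (h ▸ Finset.mem_insert_self a (B.erase b)) haB
      have hab : a ≠ b := fun e => haB (e ▸ hbB)
      have hAe : A = insert a (A.erase a) := (Finset.insert_erase haA).symm
      have hdep : ¬ Indep (insert a (insert b (A.erase a))) := by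
        intro hi
        have h3 := hu _ (A.erase a) hi (h_subset _ _ (Finset.erase_subset _ _) hA)
          (aux_indVec_sum (by clear hu h h1 h2 h_subset h_exchange; grind)
            (by clear hu h h1 h2 h_subset h_exchange; grind))
        have hAm : A ∈ ({insert a (insert b (A.erase a)), A.erase a} : Set (Finset X)) :=
          h3 ▸ Set.mem_insert _ _
        rcases hAm with h | h
        · apply hbA
          rw [h]
          simp
        · exact Finset.notMem_erase a A (h ▸ haA)
      have := aux_case_two Indep h_subset (A.erase a) a b (Finset.notMem_erase _ _)
        (fun h => hbA (Finset.mem_of_mem_erase h)) hab (hAe ▸ hA) h1 hdep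
      rw [← hAe, ← hBe] at this
      exact this
    · rw [segment_symm]
      refine aux_lt Indep h_subset h_exchange B A hB hA hlt fun C D hC hD h => ?_
      rw [Set.pair_comm]
      exact hu C D hC hD (by rw [add_comm, h])
end
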